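/- Set P = (Y_{t₁,t₂}∘L_{t₁,t₂})⊗I_{t₃}, P' = (Y'_{t₁,t₂}∘L'_{t₁,t₂})⊗I_{t₃}, Q = I_{t₁}⊗(Y_{t₂,t₃}∘L_{t₂,t₃}) and Q' = I_{t₁}⊗(Y'_{t₂,t₃}∘L'_{t₂,t₃}), all linear endomorphisms of V_{t₁}⊗V_{t₂}⊗V_{t₃}. Then, writing [A,B] = AB − BA: [P,Q] = [P',Q'] = [Q',P] = [Q,P'] = ((−1)^{σ₂}·λ₁·κ/(λ₁+λ₂))·(Y_{t₁,t₂}⊗I_{t₃})∘Y'_{t₄,t₃}∘L_{t₇,t₃}∘(L'_{t₁,t₂}⊗I_{t₃}) − ((−1)^{σ₂}·λ₃/(λ₂+λ₃))·(Y'_{t₁,t₂}⊗I_{t₃})∘Y_{t₇,t₃}∘L'_{t₄,t₃}∘(L_{t₁,t₂}⊗I_{t₃}). -/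

import Mathlib

open TensorProduct

noncomputable section

/-- a triple t = (λ, μ, σ) ∈ ℚ × ℚ × ℤ/2 -/
structure Triple where
  lam : ℚ
  mu : ℚ
  sg : ZMod 2

instance : Add Triple := ⟨fun a b => ⟨a.lam + b.lam, a.mu + b.mu, a.sg + b.sg⟩⟩
instance : Neg Triple := ⟨fun a => ⟨-a.lam, -a.mu, -a.sg⟩⟩
instance : Sub Triple := ⟨fun a b => a + -b⟩

def e₂ : Triple := ⟨0, 1, 0⟩
def e₃ : Triple := ⟨0, 0, 1⟩
/-- t* = (−λ, −μ, σ+1) -/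
def Triple.star (t : Triple) : Triple := ⟨-t.lam, -t.mu, t.sg + 1⟩

/-- the underlying space of every V_t: basis v = (1,0) (degree σ), w = (0,1) (degree σ+1) -/
abbrev V : Type := ℚ × ℚ
abbrev VV : Type := V ⊗[ℚ] V
abbrev VVV : Type := V ⊗[ℚ] VV

def vv : V := (1, 0)
def ww : V := (0, 1)

/-- (−1)^σ -/
def sgn (s : ZMod 2) : ℚ := if s = 0 then 1 else -1

/-- H: v ↦ (μ+1)v, w ↦ (μ−1)w -/
def opH (t : Triple) : V →ₗ[ℚ] V :=
  LinearMap.prodMap ((t.mu + 1) • LinearMap.id) ((t.mu - 1) • LinearMap.id)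
/-- D: multiplication by λ -/
def opD (t : Triple) : V →ₗ[ℚ] V := t.lam • LinearMap.id
/-- E: v ↦ 0, w ↦ λv -/
def opE (t : Triple) : V →ₗ[ℚ] V := (LinearMap.inl ℚ ℚ ℚ) ∘ₗ (t.lam • LinearMap.snd ℚ ℚ ℚ)
/-- F: v ↦ w, w ↦ 0 -/
def opF (t : Triple) : V →ₗ[ℚ] V := (LinearMap.inr ℚ ℚ ℚ) ∘ₗ (LinearMap.fst ℚ ℚ ℚ)
/-- the parity operator x ↦ (−1)^{deg x} x on V_t -/
def opJ (t : Triple) : V →ₗ[ℚ] V :=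
  LinearMap.prodMap (sgn t.sg • LinearMap.id) ((- sgn t.sg) • LinearMap.id)

/-- the four generators H, D, E, F of gl(1|1) -/
inductive Gen | H | D | E | F

/-- H and D have degree 0; E and F have degree 1 -/
def Gen.isEven : Gen → Bool
  | .H => true | .D => true | .E => false | .F => false

def op : Gen → Triple → V →ₗ[ℚ] V
  | .H, t => opH t
  | .D, t => opD t
  | .E, t => opE t
  | .F, t => opF t

/-- the super-Leibniz action X·(x⊗y) = (X·x)⊗y + (−1)^{deg X·deg x}·x⊗(X·y)
on V_{t₁}⊗V_{t₂} (the sign being implemented by the parity operator) -/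
def op2 (g : Gen) (t₁ t₂ : Triple) : VV →ₗ[ℚ] VV :=
  TensorProduct.map (op g t₁) LinearMap.id +
  TensorProduct.map (if g.isEven then LinearMap.id else opJ t₁) (op g t₂)

/-- the linear map ℚ×ℚ → M sending (1,0) ↦ p and (0,1) ↦ q -/
def bmap {M : Type*} [AddCommGroup M] [Module ℚ M] (p q : M) : V →ₗ[ℚ] M :=
  LinearMap.coprod (LinearMap.toSpanSingleton ℚ M p) (LinearMap.toSpanSingleton ℚ M q)

/-- Y_{t₁,t₂} : V_{t₁+t₂+e₂} → V_{t₁}⊗V_{t₂} -/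
def Ymap (t₁ t₂ : Triple) : V →ₗ[ℚ] VV :=
  bmap (vv ⊗ₜ[ℚ] vv) (ww ⊗ₜ[ℚ] vv + sgn t₁.sg • (vv ⊗ₜ[ℚ] ww))

/-- Y'_{t₁,t₂} : V_{t₁+t₂−e₂+e₃} → V_{t₁}⊗V_{t₂} -/
def Y'map (t₁ t₂ : Triple) : V →ₗ[ℚ] VV :=
  bmap ((t₁.lam + t₂.lam)⁻¹ •
      (t₁.lam • (vv ⊗ₜ[ℚ] ww) - (sgn t₁.sg * t₂.lam) • (ww ⊗ₜ[ℚ] vv)))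
    (ww ⊗ₜ[ℚ] ww)

/-- L_{t₁,t₂} : V_{t₁}⊗V_{t₂} → V_{t₁+t₂+e₂} -/
def Lmap (t₁ t₂ : Triple) : VV →ₗ[ℚ] V :=
  TensorProduct.lift (LinearMap.mk₂ ℚ
    (fun x y => ((x.1 * y.1 : ℚ),
      (t₁.lam / (t₁.lam + t₂.lam)) * (x.2 * y.1)
        + (sgn t₁.sg * t₂.lam / (t₁.lam + t₂.lam)) * (x.1 * y.2)))
    (by intro x x' y; apply Prod.ext <;> simp <;> ring)
    (by intro a x y; apply Prod.ext <;> simp [smul_eq_mul] <;> ring)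
    (by intro x y y'; apply Prod.ext <;> simp <;> ring)
    (by intro a x y; apply Prod.ext <;> simp [smul_eq_mul] <;> ring))

/-- L'_{t₁,t₂} : V_{t₁}⊗V_{t₂} → V_{t₁+t₂−e₂+e₃} -/
def L'map (t₁ t₂ : Triple) : VV →ₗ[ℚ] V :=
  TensorProduct.lift (LinearMap.mk₂ ℚ
    (fun x y => ((x.1 * y.2 - sgn t₁.sg * (x.2 * y.1) : ℚ), (x.2 * y.2 : ℚ)))
    (by intro x x' y; apply Prod.ext <;> simp <;> ring)
    (by intro a x y; apply Prod.ext <;> simp [smul_eq_mul] <;> ring)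
    (by intro x y y'; apply Prod.ext <;> simp <;> ring)
    (by intro a x y; apply Prod.ext <;> simp [smul_eq_mul] <;> ring))

/-- ∩_t : V_{t*}⊗V_t → ℚ -/
def capMap (t : Triple) : VV →ₗ[ℚ] ℚ :=
  TensorProduct.lift (LinearMap.mk₂ ℚ
    (fun x y => (x.1 * y.2 + sgn t.sg * (x.2 * y.1) : ℚ))
    (by intro x x' y; simp; ring)
    (by intro a x y; simp [smul_eq_mul]; ring)
    (by intro x y y'; simp; ring)
    (by intro a x y; simp [smul_eq_mul]; ring))

/-- ∪_t : ℚ → V_{t*}⊗V_t -/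
def cupMap (t : Triple) : ℚ →ₗ[ℚ] VV :=
  LinearMap.toSpanSingleton ℚ VV (ww ⊗ₜ[ℚ] vv - sgn t.sg • (vv ⊗ₜ[ℚ] ww))


/-- t₄ = t₁+t₂+e₂ -/
def T4 (t₁ t₂ : Triple) : Triple := t₁ + t₂ + e₂
/-- t₅ = t₄+t₃+e₂ -/
def T5 (t₁ t₂ t₃ : Triple) : Triple := T4 t₁ t₂ + t₃ + e₂
/-- t₆ = t₂+t₃+e₂ -/
def T6 (t₂ t₃ : Triple) : Triple := t₂ + t₃ + e₂
/-- t₇ = t₄−2e₂+e₃ -/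
def T7 (t₁ t₂ : Triple) : Triple := T4 t₁ t₂ - e₂ - e₂ + e₃
/-- t₈ = t₅−2e₂+e₃ -/
def T8 (t₁ t₂ t₃ : Triple) : Triple := T5 t₁ t₂ t₃ - e₂ - e₂ + e₃
/-- t₉ = t₆−2e₂+e₃ -/
def T9 (t₂ t₃ : Triple) : Triple := T6 t₂ t₃ - e₂ - e₂ + e₃
/-- κ = λ₂(λ₁+λ₂+λ₃)/((λ₁+λ₂)(λ₂+λ₃)) -/
def kap (t₁ t₂ t₃ : Triple) : ℚ :=
  t₂.lam * (t₁.lam + t₂.lam + t₃.lam) / ((t₁.lam + t₂.lam) * (t₂.lam + t₃.lam))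

/-- f⊗I as an endomorphism of V₁⊗(V₂⊗V₃), via the associator -/
def endo12 (f : VV →ₗ[ℚ] VV) : VVV →ₗ[ℚ] VVV :=
  (TensorProduct.assoc ℚ V V V).toLinearMap
    ∘ₗ TensorProduct.map f LinearMap.id
    ∘ₗ (TensorProduct.assoc ℚ V V V).symm.toLinearMap

/-- the commutator [A,B] = A∘B − B∘A (written additively) -/
def lcomm (A B : VVV →ₗ[ℚ] VVV) : VVV →ₗ[ℚ] VVV :=
  A ∘ₗ B + (-1 : ℚ) • (B ∘ₗ A)

/-!
Since `P + P' = 1`, we have `[P, Q] = P Q (P + P') - (P + P') Q P = P Q P' - P' Q P`, and replacing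
`P` or `Q` by its complement only changes the sign of the commutator. Each of the two terms
`P Q P'` and `P' Q P` factors through a composite such as `(L₁₂ ⊗ 1) Q (Y'₁₂ ⊗ 1)`, whose two
halves, split at `V_{t₁} ⊗ V_{t₆}` in the middle of `Q`, are evaluated by recoupling (6j) formulas:
they are combinations of the intertwiners through the constituents of `V_{t₁} ⊗ V_{t₆}`. The
orthogonality relations there leave a single summand, and `κ` is the 6j coefficient of
`(1 ⊗ L₂₃) (Y'₁₂ ⊗ 1)`.
-/

theorem sgn_add (s s' : ZMod 2) : sgn (s + s') = sgn s * sgn s' := by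
  revert s s'
  decide +kernel

theorem sgn_mul_self (s : ZMod 2) : sgn s * sgn s = 1 := by
  rw [← sgn_add, CharTwo.add_self_eq_zero, sgn, if_pos rfl]

theorem Triple.add_lam (a b : Triple) : (a + b).lam = a.lam + b.lam := rfl

theorem Triple.add_sg (a b : Triple) : (a + b).sg = a.sg + b.sg := rfl

theorem Triple.sub_lam (a b : Triple) : (a - b).lam = a.lam - b.lam :=
  (sub_eq_add_neg _ _).symm

theorem Triple.sub_sg (a b : Triple) : (a - b).sg = a.sg - b.sg :=
  (sub_eq_add_neg _ _).symm

theorem T4_lam (a b : Triple) : (T4 a b).lam = a.lam + b.lam := by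
  simp [T4, e₂, Triple.add_lam]

theorem T6_lam (a b : Triple) : (T6 a b).lam = a.lam + b.lam :=
  T4_lam a b

theorem T7_lam (a b : Triple) : (T7 a b).lam = a.lam + b.lam := by
  simp [T7, e₂, e₃, Triple.add_lam, Triple.sub_lam, T4_lam]

theorem sgn_T4_sg (a b : Triple) : sgn (T4 a b).sg = sgn a.sg * sgn b.sg := by
  simp [T4, e₂, Triple.add_sg, sgn_add]

theorem sgn_T7_sg (a b : Triple) : sgn (T7 a b).sg = -(sgn a.sg * sgn b.sg) := by
  have sgn_one : sgn 1 = -1 := rfl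
  simp [T7, e₂, e₃, Triple.add_sg, Triple.sub_sg, sgn_add, sgn_T4_sg, sgn_one]

section Basis

variable {M : Type*} [AddCommGroup M] [Module ℚ M]

theorem V.hom_ext {f g : V →ₗ[ℚ] M} (hv : f vv = g vv) (hw : f ww = g ww) : f = g :=
  LinearMap.prod_ext (LinearMap.ext_ring hv) (LinearMap.ext_ring hw)

theorem VV.hom_ext {f g : VV →ₗ[ℚ] M}
    (hvv : f (vv ⊗ₜ vv) = g (vv ⊗ₜ vv)) (hvw : f (vv ⊗ₜ ww) = g (vv ⊗ₜ ww))
    (hwv : f (ww ⊗ₜ vv) = g (ww ⊗ₜ vv)) (hww : f (ww ⊗ₜ ww) = g (ww ⊗ₜ ww)) : f = g :=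
  TensorProduct.ext (V.hom_ext (V.hom_ext hvv hvw) (V.hom_ext hwv hww))

theorem bmap_vv (p q : M) : bmap p q vv = p := by
  simp [bmap, vv]

theorem bmap_ww (p q : M) : bmap p q ww = q := by
  simp [bmap, ww]

end Basis

theorem Ymap_vv (a b : Triple) : Ymap a b vv = vv ⊗ₜ[ℚ] vv :=
  bmap_vv _ _

theorem Ymap_ww (a b : Triple) :
    Ymap a b ww = ww ⊗ₜ[ℚ] vv + sgn a.sg • (vv ⊗ₜ[ℚ] ww) :=
  bmap_ww _ _

theorem Y'map_vv (a b : Triple) :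
    Y'map a b vv = (a.lam + b.lam)⁻¹ •
      (a.lam • (vv ⊗ₜ[ℚ] ww) - (sgn a.sg * b.lam) • (ww ⊗ₜ[ℚ] vv)) :=
  bmap_vv _ _

theorem Y'map_ww (a b : Triple) : Y'map a b ww = ww ⊗ₜ[ℚ] ww :=
  bmap_ww _ _

theorem Lmap_vv_tmul_vv (a b : Triple) : Lmap a b (vv ⊗ₜ[ℚ] vv) = vv := by
  simp [Lmap, vv]

theorem Lmap_ww_tmul_vv (a b : Triple) :
    Lmap a b (ww ⊗ₜ[ℚ] vv) = (a.lam / (a.lam + b.lam)) • ww := by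
  simp [Lmap, vv, ww]

theorem Lmap_vv_tmul_ww (a b : Triple) :
    Lmap a b (vv ⊗ₜ[ℚ] ww) = (sgn a.sg * b.lam / (a.lam + b.lam)) • ww := by
  simp [Lmap, vv, ww]

theorem Lmap_ww_tmul_ww (a b : Triple) : Lmap a b (ww ⊗ₜ[ℚ] ww) = 0 := by
  simp [Lmap, ww]

theorem L'map_vv_tmul_vv (a b : Triple) : L'map a b (vv ⊗ₜ[ℚ] vv) = 0 := by
  simp [L'map, vv]

theorem L'map_ww_tmul_vv (a b : Triple) : L'map a b (ww ⊗ₜ[ℚ] vv) = (-sgn a.sg) • vv := by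
  simp [L'map, vv, ww]

theorem L'map_vv_tmul_ww (a b : Triple) : L'map a b (vv ⊗ₜ[ℚ] ww) = vv := by
  simp [L'map, vv, ww]

theorem L'map_ww_tmul_ww (a b : Triple) : L'map a b (ww ⊗ₜ[ℚ] ww) = ww := by
  simp [L'map, ww]

theorem Lmap_comp_Y'map (a b : Triple) : Lmap a b ∘ₗ Y'map a b = 0 := by
  apply V.hom_ext <;>
    simp only [LinearMap.comp_apply, LinearMap.zero_apply, Y'map_vv, Y'map_ww, map_smul, map_sub,
      Lmap_vv_tmul_ww, Lmap_ww_tmul_vv, Lmap_ww_tmul_ww]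
  module

theorem L'map_comp_Ymap (a b : Triple) : L'map a b ∘ₗ Ymap a b = 0 := by
  apply V.hom_ext <;>
    simp only [LinearMap.comp_apply, LinearMap.zero_apply, Ymap_vv, Ymap_ww, map_smul, map_add,
      L'map_vv_tmul_vv, L'map_vv_tmul_ww, L'map_ww_tmul_vv]
  module

theorem L'map_comp_Y'map {a b : Triple} (h : a.lam + b.lam ≠ 0) :
    L'map a b ∘ₗ Y'map a b = LinearMap.id := by
  have hs := sgn_mul_self a.sg
  apply V.hom_ext <;>
    simp only [LinearMap.comp_apply, LinearMap.id_apply, Y'map_vv, Y'map_ww, map_smul, map_sub,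
      L'map_vv_tmul_ww, L'map_ww_tmul_vv, L'map_ww_tmul_ww]
  match_scalars
  field_simp
  grind

theorem Ymap_comp_Lmap_add_Y'map_comp_L'map {a b : Triple} (h : a.lam + b.lam ≠ 0) :
    Ymap a b ∘ₗ Lmap a b + Y'map a b ∘ₗ L'map a b = LinearMap.id := by
  have hs := sgn_mul_self a.sg
  apply VV.hom_ext <;>
    simp only [LinearMap.add_apply, LinearMap.comp_apply, map_smul, map_zero,
      Lmap_vv_tmul_vv, Lmap_vv_tmul_ww, Lmap_ww_tmul_vv, Lmap_ww_tmul_ww,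
      L'map_vv_tmul_vv, L'map_vv_tmul_ww, L'map_ww_tmul_vv, L'map_ww_tmul_ww,
      Ymap_vv, Ymap_ww, Y'map_vv, Y'map_ww] <;>
    match_scalars <;> field_simp <;> grind

section Recoupling

variable {t₁ t₂ t₃ : Triple}

theorem rTensor_Lmap_comp_lTensor_Ymap
    (h₁₂ : t₁.lam + t₂.lam ≠ 0) (h₁₂₃ : t₁.lam + t₂.lam + t₃.lam ≠ 0) :
    (Lmap t₁ t₂).rTensor V ∘ₗ (TensorProduct.assoc ℚ V V V).symm.toLinearMap ∘ₗ
        (Ymap t₂ t₃).lTensor V =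
      Ymap (T4 t₁ t₂) t₃ ∘ₗ Lmap t₁ (T6 t₂ t₃) +
        (sgn t₂.sg * t₁.lam / (t₁.lam + t₂.lam)) •
          (Y'map (T4 t₁ t₂) t₃ ∘ₗ L'map t₁ (T6 t₂ t₃)) := by
  have hs₁ := sgn_mul_self t₁.sg
  have hs₂ := sgn_mul_self t₂.sg
  apply VV.hom_ext <;>
    simp only [LinearMap.add_apply, LinearMap.smul_apply, LinearMap.comp_apply,
      LinearEquiv.coe_coe, LinearMap.lTensor_tmul, LinearMap.rTensor_tmul, assoc_symm_tmul,
      tmul_add, tmul_smul, zero_tmul, ← smul_tmul', map_add, map_smul, map_zero,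
      Lmap_vv_tmul_vv, Lmap_vv_tmul_ww, Lmap_ww_tmul_vv, Lmap_ww_tmul_ww,
      L'map_vv_tmul_vv, L'map_vv_tmul_ww, L'map_ww_tmul_vv, L'map_ww_tmul_ww,
      Ymap_vv, Ymap_ww, Y'map_vv, Y'map_ww, T4_lam, T6_lam, sgn_T4_sg] <;>
    match_scalars <;> field_simp <;> grind

theorem rTensor_L'map_comp_lTensor_Ymap :
    (L'map t₁ t₂).rTensor V ∘ₗ (TensorProduct.assoc ℚ V V V).symm.toLinearMap ∘ₗ
        (Ymap t₂ t₃).lTensor V =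
      Ymap (T7 t₁ t₂) t₃ ∘ₗ L'map t₁ (T6 t₂ t₃) := by
  apply VV.hom_ext <;>
    simp only [LinearMap.comp_apply, LinearEquiv.coe_coe, LinearMap.lTensor_tmul,
      LinearMap.rTensor_tmul, assoc_symm_tmul, tmul_add, tmul_smul, zero_tmul, ← smul_tmul',
      map_add, map_smul, map_zero,
      L'map_vv_tmul_vv, L'map_vv_tmul_ww, L'map_ww_tmul_vv, L'map_ww_tmul_ww,
      Ymap_vv, Ymap_ww, sgn_T7_sg] <;>
    match_scalars <;> ring

theorem lTensor_Lmap_comp_rTensor_Ymap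
    (h₂₃ : t₂.lam + t₃.lam ≠ 0) (h₁₂₃ : t₁.lam + t₂.lam + t₃.lam ≠ 0) :
    (Lmap t₂ t₃).lTensor V ∘ₗ (TensorProduct.assoc ℚ V V V).toLinearMap ∘ₗ
        (Ymap t₁ t₂).rTensor V =
      Ymap t₁ (T6 t₂ t₃) ∘ₗ Lmap (T4 t₁ t₂) t₃ +
        (sgn t₂.sg * t₃.lam / (t₂.lam + t₃.lam)) •
          (Y'map t₁ (T6 t₂ t₃) ∘ₗ L'map (T4 t₁ t₂) t₃) := by
  have hs₁ := sgn_mul_self t₁.sg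
  have hs₂ := sgn_mul_self t₂.sg
  apply VV.hom_ext <;>
    simp only [LinearMap.add_apply, LinearMap.smul_apply, LinearMap.comp_apply,
      LinearEquiv.coe_coe, LinearMap.lTensor_tmul, LinearMap.rTensor_tmul, assoc_tmul,
      add_tmul, tmul_smul, tmul_zero, ← smul_tmul', map_add, map_smul, map_zero,
      Lmap_vv_tmul_vv, Lmap_vv_tmul_ww, Lmap_ww_tmul_vv, Lmap_ww_tmul_ww,
      L'map_vv_tmul_vv, L'map_vv_tmul_ww, L'map_ww_tmul_vv, L'map_ww_tmul_ww,
      Ymap_vv, Ymap_ww, Y'map_vv, Y'map_ww, T4_lam, T6_lam, sgn_T4_sg] <;>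
    match_scalars <;> field_simp <;> grind

theorem lTensor_Lmap_comp_rTensor_Y'map
    (h₁₂ : t₁.lam + t₂.lam ≠ 0) (h₂₃ : t₂.lam + t₃.lam ≠ 0)
    (h₁₂₃ : t₁.lam + t₂.lam + t₃.lam ≠ 0) :
    (Lmap t₂ t₃).lTensor V ∘ₗ (TensorProduct.assoc ℚ V V V).toLinearMap ∘ₗ
        (Y'map t₁ t₂).rTensor V =
      kap t₁ t₂ t₃ • (Y'map t₁ (T6 t₂ t₃) ∘ₗ Lmap (T7 t₁ t₂) t₃) := by
  apply VV.hom_ext <;>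
    simp only [LinearMap.smul_apply, LinearMap.comp_apply, LinearEquiv.coe_coe,
      LinearMap.lTensor_tmul, LinearMap.rTensor_tmul, assoc_tmul, sub_tmul, tmul_smul, tmul_zero,
      ← smul_tmul', map_sub, map_smul, map_zero,
      Lmap_vv_tmul_vv, Lmap_vv_tmul_ww, Lmap_ww_tmul_vv, Lmap_ww_tmul_ww,
      Y'map_vv, Y'map_ww, T6_lam, T7_lam, sgn_T7_sg, kap, ← add_assoc] <;>
    match_scalars <;> field_simp

theorem rTensor_Lmap_comp_projection_comp_rTensor_Y'map
    (h₁₂ : t₁.lam + t₂.lam ≠ 0) (h₂₃ : t₂.lam + t₃.lam ≠ 0)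
    (h₁₂₃ : t₁.lam + t₂.lam + t₃.lam ≠ 0) :
    (Lmap t₁ t₂).rTensor V ∘ₗ (TensorProduct.assoc ℚ V V V).symm.toLinearMap ∘ₗ
        (Ymap t₂ t₃ ∘ₗ Lmap t₂ t₃).lTensor V ∘ₗ
        (TensorProduct.assoc ℚ V V V).toLinearMap ∘ₗ (Y'map t₁ t₂).rTensor V =
      (sgn t₂.sg * t₁.lam * kap t₁ t₂ t₃ / (t₁.lam + t₂.lam)) •
        (Y'map (T4 t₁ t₂) t₃ ∘ₗ Lmap (T7 t₁ t₂) t₃) := by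
  have h₁₆ : t₁.lam + (T6 t₂ t₃).lam ≠ 0 := by rwa [T6_lam, ← add_assoc]
  calc
    _ = ((Lmap t₁ t₂).rTensor V ∘ₗ (TensorProduct.assoc ℚ V V V).symm.toLinearMap ∘ₗ
            (Ymap t₂ t₃).lTensor V) ∘ₗ
          ((Lmap t₂ t₃).lTensor V ∘ₗ (TensorProduct.assoc ℚ V V V).toLinearMap ∘ₗ
            (Y'map t₁ t₂).rTensor V) := by
      simp only [LinearMap.lTensor_comp, LinearMap.comp_assoc]
    _ = kap t₁ t₂ t₃ •
          (Ymap (T4 t₁ t₂) t₃ ∘ₗ (Lmap t₁ (T6 t₂ t₃) ∘ₗ Y'map t₁ (T6 t₂ t₃)) ∘ₗ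
              Lmap (T7 t₁ t₂) t₃ +
            (sgn t₂.sg * t₁.lam / (t₁.lam + t₂.lam)) •
              Y'map (T4 t₁ t₂) t₃ ∘ₗ (L'map t₁ (T6 t₂ t₃) ∘ₗ Y'map t₁ (T6 t₂ t₃)) ∘ₗ
                Lmap (T7 t₁ t₂) t₃) := by
      rw [rTensor_Lmap_comp_lTensor_Ymap h₁₂ h₁₂₃, lTensor_Lmap_comp_rTensor_Y'map h₁₂ h₂₃ h₁₂₃]
      simp only [LinearMap.comp_smul, LinearMap.add_comp, LinearMap.smul_comp,
        LinearMap.comp_assoc]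
    _ = _ := by
      rw [Lmap_comp_Y'map, L'map_comp_Y'map h₁₆, LinearMap.zero_comp, LinearMap.comp_zero,
        zero_add, LinearMap.id_comp, smul_smul]
      congr 1
      ring

theorem rTensor_L'map_comp_projection_comp_rTensor_Ymap
    (h₂₃ : t₂.lam + t₃.lam ≠ 0) (h₁₂₃ : t₁.lam + t₂.lam + t₃.lam ≠ 0) :
    (L'map t₁ t₂).rTensor V ∘ₗ (TensorProduct.assoc ℚ V V V).symm.toLinearMap ∘ₗ
        (Ymap t₂ t₃ ∘ₗ Lmap t₂ t₃).lTensor V ∘ₗ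
        (TensorProduct.assoc ℚ V V V).toLinearMap ∘ₗ (Ymap t₁ t₂).rTensor V =
      (sgn t₂.sg * t₃.lam / (t₂.lam + t₃.lam)) •
        (Ymap (T7 t₁ t₂) t₃ ∘ₗ L'map (T4 t₁ t₂) t₃) := by
  have h₁₆ : t₁.lam + (T6 t₂ t₃).lam ≠ 0 := by rwa [T6_lam, ← add_assoc]
  calc
    _ = ((L'map t₁ t₂).rTensor V ∘ₗ (TensorProduct.assoc ℚ V V V).symm.toLinearMap ∘ₗ
            (Ymap t₂ t₃).lTensor V) ∘ₗ
          ((Lmap t₂ t₃).lTensor V ∘ₗ (TensorProduct.assoc ℚ V V V).toLinearMap ∘ₗ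
            (Ymap t₁ t₂).rTensor V) := by
      simp only [LinearMap.lTensor_comp, LinearMap.comp_assoc]
    _ = Ymap (T7 t₁ t₂) t₃ ∘ₗ (L'map t₁ (T6 t₂ t₃) ∘ₗ Ymap t₁ (T6 t₂ t₃)) ∘ₗ
            Lmap (T4 t₁ t₂) t₃ +
          (sgn t₂.sg * t₃.lam / (t₂.lam + t₃.lam)) •
            Ymap (T7 t₁ t₂) t₃ ∘ₗ (L'map t₁ (T6 t₂ t₃) ∘ₗ Y'map t₁ (T6 t₂ t₃)) ∘ₗ
              L'map (T4 t₁ t₂) t₃ := by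
      rw [rTensor_L'map_comp_lTensor_Ymap, lTensor_Lmap_comp_rTensor_Ymap h₂₃ h₁₂₃]
      simp only [LinearMap.comp_smul, LinearMap.comp_add, LinearMap.comp_assoc]
    _ = _ := by
      rw [L'map_comp_Ymap, L'map_comp_Y'map h₁₆, LinearMap.zero_comp, LinearMap.comp_zero,
        zero_add, LinearMap.id_comp]

end Recoupling

section Commutator

variable {A A' B B' : VVV →ₗ[ℚ] VVV}

theorem lcomm_eq_of_add_eq_id (h : A + A' = LinearMap.id) :
    lcomm A B = A ∘ₗ B ∘ₗ A' + (-1 : ℚ) • (A' ∘ₗ B ∘ₗ A) := by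
  calc
    lcomm A B = A ∘ₗ B ∘ₗ (A + A') + (-1 : ℚ) • ((A + A') ∘ₗ B ∘ₗ A) := by
      rw [h, LinearMap.comp_id, LinearMap.id_comp, lcomm]
    _ = _ := by
      simp only [LinearMap.comp_add, LinearMap.add_comp]
      module

theorem lcomm_left_eq_lcomm_swap (h : A + A' = LinearMap.id) : lcomm A' B = lcomm B A := by
  calc
    lcomm A' B = (A + A') ∘ₗ B + (-1 : ℚ) • (A ∘ₗ B + B ∘ₗ A') := by
      simp only [lcomm, LinearMap.add_comp]
      module
    _ = B ∘ₗ (A + A') + (-1 : ℚ) • (A ∘ₗ B + B ∘ₗ A') := by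
      rw [h, LinearMap.comp_id, LinearMap.id_comp]
    _ = lcomm B A := by
      simp only [lcomm, LinearMap.comp_add]
      module

theorem lcomm_right_eq_lcomm_swap (h : B + B' = LinearMap.id) : lcomm A B' = lcomm B A := by
  calc
    lcomm A B' = A ∘ₗ (B + B') + (-1 : ℚ) • (A ∘ₗ B + B' ∘ₗ A) := by
      simp only [lcomm, LinearMap.comp_add]
      module
    _ = (B + B') ∘ₗ A + (-1 : ℚ) • (A ∘ₗ B + B' ∘ₗ A) := by
      rw [h, LinearMap.comp_id, LinearMap.id_comp]
    _ = lcomm B A := by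
      simp only [lcomm, LinearMap.add_comp]
      module

end Commutator

theorem endo12_add_endo12_of_add_eq_id {f g : VV →ₗ[ℚ] VV} (h : f + g = LinearMap.id) :
    endo12 f + endo12 g = LinearMap.id := by
  simp only [endo12, ← LinearMap.comp_add, ← LinearMap.add_comp, ← TensorProduct.map_add_left, h,
    TensorProduct.map_id, LinearMap.id_comp, LinearEquiv.comp_symm]

theorem endo12_comp_lTensor_comp_endo12 (f g : V →ₗ[ℚ] VV) (p q : VV →ₗ[ℚ] V)
    (T : VV →ₗ[ℚ] VV) :
    endo12 (f ∘ₗ p) ∘ₗ T.lTensor V ∘ₗ endo12 (g ∘ₗ q) =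
      (TensorProduct.assoc ℚ V V V).toLinearMap ∘ₗ f.rTensor V ∘ₗ
        (p.rTensor V ∘ₗ (TensorProduct.assoc ℚ V V V).symm.toLinearMap ∘ₗ T.lTensor V ∘ₗ
          (TensorProduct.assoc ℚ V V V).toLinearMap ∘ₗ g.rTensor V) ∘ₗ
        q.rTensor V ∘ₗ (TensorProduct.assoc ℚ V V V).symm.toLinearMap := by
  simp only [endo12, ← LinearMap.rTensor_def, LinearMap.rTensor_comp, LinearMap.comp_assoc]

/-- Lemma 28: the four commutators coincide. -/
theorem stmt16 (t₁ t₂ t₃ : Triple)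
    (h₁ : t₁.lam ≠ 0) (h₂ : t₂.lam ≠ 0) (h₃ : t₃.lam ≠ 0)
    (h₁₂ : t₁.lam + t₂.lam ≠ 0) (h₂₃ : t₂.lam + t₃.lam ≠ 0)
    (h₁₂₃ : t₁.lam + t₂.lam + t₃.lam ≠ 0) :
    let P : VVV →ₗ[ℚ] VVV := endo12 (Ymap t₁ t₂ ∘ₗ Lmap t₁ t₂)
    let P' : VVV →ₗ[ℚ] VVV := endo12 (Y'map t₁ t₂ ∘ₗ L'map t₁ t₂)
    let Q : VVV →ₗ[ℚ] VVV := TensorProduct.map LinearMap.id (Ymap t₂ t₃ ∘ₗ Lmap t₂ t₃)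
    let Q' : VVV →ₗ[ℚ] VVV := TensorProduct.map LinearMap.id (Y'map t₂ t₃ ∘ₗ L'map t₂ t₃)
    let R : VVV →ₗ[ℚ] VVV :=
      (sgn t₂.sg * t₁.lam * kap t₁ t₂ t₃ / (t₁.lam + t₂.lam)) •
        ((TensorProduct.assoc ℚ V V V).toLinearMap
          ∘ₗ TensorProduct.map (Ymap t₁ t₂) LinearMap.id
          ∘ₗ Y'map (T4 t₁ t₂) t₃ ∘ₗ Lmap (T7 t₁ t₂) t₃
          ∘ₗ TensorProduct.map (L'map t₁ t₂) LinearMap.id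
          ∘ₗ (TensorProduct.assoc ℚ V V V).symm.toLinearMap)
      + (-(sgn t₂.sg * t₃.lam / (t₂.lam + t₃.lam))) •
        ((TensorProduct.assoc ℚ V V V).toLinearMap
          ∘ₗ TensorProduct.map (Y'map t₁ t₂) LinearMap.id
          ∘ₗ Ymap (T7 t₁ t₂) t₃ ∘ₗ L'map (T4 t₁ t₂) t₃
          ∘ₗ TensorProduct.map (Lmap t₁ t₂) LinearMap.id
          ∘ₗ (TensorProduct.assoc ℚ V V V).symm.toLinearMap)
    lcomm P Q = R ∧ lcomm P' Q' = R ∧ lcomm Q' P = R ∧ lcomm Q P' = R := by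
  intro P P' Q Q' R
  have hP : P + P' = LinearMap.id :=
    endo12_add_endo12_of_add_eq_id (Ymap_comp_Lmap_add_Y'map_comp_L'map h₁₂)
  have hQ : Q + Q' = LinearMap.id := by
    rw [← TensorProduct.map_add_right, Ymap_comp_Lmap_add_Y'map_comp_L'map h₂₃,
      TensorProduct.map_id]
  have hPQ : lcomm P Q = R := by
    rw [lcomm_eq_of_add_eq_id hP]
    simp only [P, P', Q, R, ← LinearMap.lTensor_def, ← LinearMap.rTensor_def,
      endo12_comp_lTensor_comp_endo12, LinearMap.smul_comp, LinearMap.comp_smul, smul_smul,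
      neg_one_mul, rTensor_Lmap_comp_projection_comp_rTensor_Y'map h₁₂ h₂₃ h₁₂₃,
      rTensor_L'map_comp_projection_comp_rTensor_Ymap h₂₃ h₁₂₃, LinearMap.comp_assoc]
  have hQ'P : lcomm Q' P = R := (lcomm_left_eq_lcomm_swap hQ).trans hPQ
  have hP'Q' : lcomm P' Q' = R := (lcomm_left_eq_lcomm_swap hP).trans hQ'P
  have hQP' : lcomm Q P' = R := (lcomm_right_eq_lcomm_swap hP).trans hPQ
  exact ⟨hPQ, hP'Q', hQ'P, hQP'⟩

end
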